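/- Let 0 < β < α < 1 and consider the random map T = {T1, T2; p1, p2} with T1(x) = x(1 + 2^α x^α) on [0,1/2), T1(x) = 2x − 1 on [1/2,1]; T2(x) = x(1 + 2^β x^β) on [0,1/2), T2(x) = (3/2)x − 3/4 on [1/2,1]; p1(x) = (1 + x^α)/3 on [0,1/2), p1(x) = 1/3 on [1/2,1]; and p2 = 1 − p1. Then T admits a unique absolutely continuous invariant probability measure: there is exactly one probability measure μ on [0,1] with μ ≪ m and μ(A) = ∫_{T1⁻¹A} p1 dμ + ∫_{T2⁻¹A} p2 dμ for all Borel sets A. -/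

import Mathlib

/-!
The random map acts on densities by an explicit transfer operator `tr` with four branches. The
weights of the left branches (probability over derivative) are decreasing, and so `tr` preserves the
nonnegative decreasing functions on `(0, 1)`. Such functions are, moreover, kept below `B x ^ (-α)`
once `B` is large compared with their mass (`Good.iterate`): near `0` the contraction of the left
branches outweighs the contribution of the right branches, which involve only values of the density
beyond `1/2`, and these are bounded by twice the mass (`Good.half_le`).

The bound `B x ^ (-α)` with `α < 1` is uniformly integrable, so a good density of mass at least `ε`
cannot concentrate at `0`: it is at least `ε / 2` on an interval `(0, δ)` with `δ` depending on `ε`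
only. The left branch of `T1` stretches this interval over `(0, 1)` in a bounded number of steps
(`minorization`), after which a fixed constant can be split off, leaving a remainder that is still
decreasing and bounded by `B x ^ (-α)`. Splitting off equal constants from two such measures again
and again couples them: their iterates share a common part, up to remainders of mass at most `ε`
(`coupling`, `coupling_close`). The relation `Close ε` records this situation, and it is stable
under the random map.

Existence: the iterates of Lebesgue measure are good and have equal mass, so by coupling their
densities form a Cauchy sequence in `L¹`, and the limit is invariant (`exists_acim`).

Uniqueness: the density of an absolutely continuous measure is approximated in `L¹` by a polynomial.
Adding the same function `C (2 - x)` to the approximations for two invariant measures makes both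
positive and decreasing, and the coupling shows that the two invariant measures differ by an
arbitrarily small amount (`acim_le`).
-/

open MeasureTheory Set

noncomputable section

/-- Lebesgue measure on the unit interval `[0,1]`. -/
def mI : Measure ℝ := volume.restrict (Icc 0 1)

/-- The action `E_T` of the random map `T = {T1, T2; p1, p2}` on measures:
`(E_T ν)(A) = ∫_{T1⁻¹ A} p1 dν + ∫_{T2⁻¹ A} p2 dν`. -/
def ET (T1 T2 p1 p2 : ℝ → ℝ) (ν : Measure ℝ) : Measure ℝ :=
  (ν.withDensity fun x => ENNReal.ofReal (p1 x)).map T1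
    + (ν.withDensity fun x => ENNReal.ofReal (p2 x)).map T2

/-! ### The nonlinear branch and its inverse -/

/-- The left branch `y ↦ y (1 + (2y)^a)`, written as in the definition of `T1` and `T2`. -/
def phi (a y : ℝ) : ℝ := y * (1 + 2 ^ a * y ^ a)

/-- The derivative of `phi a` on `(0, ∞)`. -/
def dphi (a y : ℝ) : ℝ := 1 + (1 + a) * (2 ^ a * y ^ a)

/-- The inverse of `phi a : (0, 1/2) → (0, 1)`; its values off `(0, 1)` are junk. -/
def psi (a x : ℝ) : ℝ := Function.invFunOn (phi a) (Ioo 0 (1 / 2)) x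

lemma phi_strictMonoOn {a : ℝ} (ha : 0 < a) : StrictMonoOn (phi a) (Ici 0) := by
  intro x hx y hy hxy
  have hx' : (0 : ℝ) ≤ x := hx
  have h1 : x ^ a ≤ y ^ a := Real.rpow_le_rpow hx hxy.le ha.le
  have h2 : (0 : ℝ) < 2 ^ a := by positivity
  have h3 : (0 : ℝ) ≤ x ^ a := Real.rpow_nonneg hx _
  unfold phi
  have h4 : 1 + 2 ^ a * x ^ a ≤ 1 + 2 ^ a * y ^ a := by gcongr
  have h5 : 0 < 1 + 2 ^ a * x ^ a := by positivity
  nlinarith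

lemma phi_half {a : ℝ} : phi a (1 / 2) = 1 := by
  unfold phi
  rw [← Real.mul_rpow (by norm_num) (by norm_num)]
  norm_num

lemma phi_zero {a : ℝ} : phi a 0 = 0 := by simp [phi]

lemma phi_continuous {a : ℝ} (ha : 0 < a) : Continuous (phi a) := by
  unfold phi
  have := Real.continuous_rpow_const ha.le
  fun_prop

lemma phi_image {a : ℝ} (ha : 0 < a) : phi a '' Ioo 0 (1 / 2) = Ioo 0 1 := by
  apply Subset.antisymm
  · rintro _ ⟨x, hx, rfl⟩
    have h1 := phi_strictMonoOn ha (mem_Ici.2 le_rfl) (mem_Ici.2 hx.1.le) hx.1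
    have h2 := phi_strictMonoOn ha (mem_Ici.2 hx.1.le)
      (mem_Ici.2 (by norm_num : (0 : ℝ) ≤ 1 / 2)) hx.2
    rw [phi_zero] at h1
    rw [phi_half] at h2
    exact ⟨h1, h2⟩
  · have := intermediate_value_Ioo (by norm_num : (0 : ℝ) ≤ 1 / 2)
      (phi_continuous ha).continuousOn
    rwa [phi_zero, phi_half] at this

lemma phi_injOn {a : ℝ} (ha : 0 < a) : InjOn (phi a) (Ioo 0 (1 / 2)) :=
  ((phi_strictMonoOn ha).mono fun _ hx => mem_Ici.2 hx.1.le).injOn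

lemma psi_phi {a : ℝ} (ha : 0 < a) {y : ℝ} (hy : y ∈ Ioo (0 : ℝ) (1 / 2)) :
    psi a (phi a y) = y :=
  (phi_injOn ha).leftInvOn_invFunOn hy

lemma psi_mem {a : ℝ} (ha : 0 < a) {x : ℝ} (hx : x ∈ Ioo (0 : ℝ) 1) :
    psi a x ∈ Ioo (0 : ℝ) (1 / 2) := by
  rw [← phi_image ha] at hx
  exact Function.invFunOn_mem hx

lemma phi_psi {a : ℝ} (ha : 0 < a) {x : ℝ} (hx : x ∈ Ioo (0 : ℝ) 1) :
    phi a (psi a x) = x := by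
  rw [← phi_image ha] at hx
  exact Function.invFunOn_eq hx

lemma psi_monotoneOn {a : ℝ} (ha : 0 < a) : MonotoneOn (psi a) (Ioo 0 1) := by
  intro x hx y hy hxy
  by_contra! h
  have := phi_strictMonoOn ha (mem_Ici.2 (psi_mem ha hy).1.le) (mem_Ici.2 (psi_mem ha hx).1.le) h
  rw [phi_psi ha hx, phi_psi ha hy] at this
  linarith

lemma phi_hasDerivAt {a y : ℝ} (hy : 0 < y) : HasDerivAt (phi a) (dphi a y) y := by
  have h := (hasDerivAt_id y).mul
    (((Real.hasDerivAt_rpow_const (p := a) (Or.inl hy.ne')).const_mul (2 ^ a)).const_add 1)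
  have e : dphi a y = 1 * (1 + 2 ^ a * y ^ a) + id y * (2 ^ a * (a * y ^ (a - 1))) := by
    have : y ^ a = y ^ (a - 1) * y := by
      rw [← Real.rpow_add_one hy.ne']; congr 1; ring
    simp only [dphi, id, this]
    ring
  rw [e]
  exact h

lemma dphi_pos {a y : ℝ} (ha : 0 < a) (hy : 0 ≤ y) : 0 < dphi a y := by
  unfold dphi
  have := Real.rpow_nonneg hy a
  positivity

lemma two_mul_rpow_le_one {a y : ℝ} (ha : 0 < a) (hy : y ∈ Ioo (0 : ℝ) (1 / 2)) :
    2 ^ a * y ^ a ≤ 1 := by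
  rw [← Real.mul_rpow (by norm_num) hy.1.le]
  exact Real.rpow_le_one (by linarith [hy.1]) (by linarith [hy.2]) ha.le

lemma dphi_le_three {a y : ℝ} (ha : 0 < a) (ha1 : a < 1) (hy : y ∈ Ioo (0 : ℝ) (1 / 2)) :
    dphi a y ≤ 3 := by
  have := two_mul_rpow_le_one ha hy
  have h0 : 0 ≤ 2 ^ a * y ^ a := mul_nonneg (by positivity) (Real.rpow_nonneg hy.1.le _)
  unfold dphi
  nlinarith

/-! ### The transfer operator on densities -/

/-- The weight of the left branch of `T1` in the transfer operator: `p1` over the derivative. -/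
def g1 (α y : ℝ) : ℝ := (1 + y ^ α) / 3 / dphi α y

/-- The weight of the left branch of `T2` in the transfer operator: `p2` over the derivative. -/
def g2 (α β y : ℝ) : ℝ := (2 - y ^ α) / 3 / dphi β y

/-- The transfer (Perron-Frobenius) operator of the random map, as an explicit pointwise operator
on densities over `(0, 1)`. The last branch only reaches `(0, 3/4)`. -/
def tr (α β : ℝ) (f : ℝ → ℝ) (x : ℝ) : ℝ :=
  g1 α (psi α x) * f (psi α x) + g2 α β (psi β x) * f (psi β x)
    + 1 / 6 * f ((x + 1) / 2) + (if x < 3 / 4 then 4 / 9 * f (2 / 3 * x + 1 / 2) else 0)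

lemma g1_antitoneOn {α : ℝ} (hα : 0 < α) : AntitoneOn (g1 α) (Ioo 0 (1 / 2)) := by
  intro x hx y hy hxy
  have h1 : x ^ α ≤ y ^ α := Real.rpow_le_rpow hx.1.le hxy hα.le
  have h2 : (1 : ℝ) ≤ 2 ^ α := Real.one_le_rpow (by norm_num) hα.le
  have h3 : 0 ≤ x ^ α := Real.rpow_nonneg hx.1.le _
  unfold g1
  rw [div_div, div_div, div_le_div_iff₀ (by have := dphi_pos hα hy.1.le; positivity)
    (by have := dphi_pos hα hx.1.le; positivity)]
  unfold dphi
  have h4 : 0 ≤ ((1 + α) * 2 ^ α - 1) * (y ^ α - x ^ α) :=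
    mul_nonneg (by nlinarith) (by linarith)
  nlinarith

lemma rpow_le_one' {α y : ℝ} (hα : 0 < α) (hy : y ∈ Ioo (0 : ℝ) (1 / 2)) : y ^ α ≤ 1 :=
  Real.rpow_le_one hy.1.le (by linarith [hy.2]) hα.le

lemma g2_antitoneOn {α β : ℝ} (hα : 0 < α) (hβ : 0 < β) :
    AntitoneOn (g2 α β) (Ioo 0 (1 / 2)) := by
  intro x hx y hy hxy
  have h1 : x ^ α ≤ y ^ α := Real.rpow_le_rpow hx.1.le hxy hα.le
  have h2 : x ^ β ≤ y ^ β := Real.rpow_le_rpow hx.1.le hxy hβ.le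
  have h3 := rpow_le_one' hα hy
  have h5 := dphi_pos hβ hx.1.le
  unfold g2
  apply div_le_div₀ (by linarith) (by linarith) h5
  unfold dphi
  gcongr

lemma g1_ge {α y : ℝ} (hα : 0 < α) (hα1 : α < 1) (hy : y ∈ Ioo (0 : ℝ) (1 / 2)) :
    1 / 9 ≤ g1 α y := by
  have h1 := dphi_pos hα hy.1.le
  have h2 := dphi_le_three hα hα1 hy
  have h3 : 0 ≤ y ^ α := Real.rpow_nonneg hy.1.le _
  unfold g1
  rw [le_div_iff₀ h1]
  linarith

lemma g2_nonneg {α β y : ℝ} (hα : 0 < α) (hβ : 0 < β) (hy : y ∈ Ioo (0 : ℝ) (1 / 2)) :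
    0 ≤ g2 α β y := by
  have h1 := dphi_pos hβ hy.1.le
  have h3 := rpow_le_one' hα hy
  unfold g2
  exact div_nonneg (by linarith) h1.le

/-- The key estimate for the left branch of `T1`: its contribution to the transfer operator applied
to `y ^ (-α)` is at most `x ^ (-α) / 3`. -/
lemma g1_bound {α y : ℝ} (hα : 0 < α) (hα1 : α < 1) (hy : y ∈ Ioo (0 : ℝ) (1 / 2)) :
    g1 α y * y ^ (-α) ≤ 1 / 3 * (phi α y) ^ (-α) := by
  have hy0 : 0 < y := hy.1
  have hu1 := two_mul_rpow_le_one hα hy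
  set u := 2 ^ α * y ^ α with hu
  have hu0 : 0 < u := by positivity
  have h1 : (1 + u) ^ α ≤ 1 + α * u := rpow_one_add_le_one_add_mul_self (by linarith) hα.le hα1.le
  -- `y ^ α (1 + u) ^ α = u ((1 + u) / 2) ^ α ≤ u`
  have h2 : y ^ α * (1 + u) ^ α ≤ u := by
    have : (1 + u) ^ α ≤ 2 ^ α := Real.rpow_le_rpow (by positivity) (by linarith) hα.le
    rw [hu, mul_comm]
    gcongr
  have hd := dphi_pos hα hy0.le
  have hphi : phi α y = y * (1 + u) := rfl
  rw [hphi, Real.mul_rpow hy0.le (by positivity), Real.rpow_neg (by positivity : 0 ≤ 1 + u)]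
  have hv : 0 < (1 + u) ^ α := by positivity
  have h3 : g1 α y ≤ 1 / 3 * ((1 + u) ^ α)⁻¹ := by
    unfold g1
    rw [div_le_iff₀ hd, ← div_eq_mul_inv, div_mul_eq_mul_div, le_div_iff₀ hv]
    have : dphi α y = 1 + (1 + α) * u := rfl
    rw [this]
    nlinarith
  have hy' : 0 < y ^ (-α) := by positivity
  nlinarith

/-- The key estimate for the left branch of `T2`: its contribution to the transfer operator applied
to `y ^ (-α)` stays below `2/3 * x ^ (-α)` by a fixed amount. -/
lemma g2_bound {α β y : ℝ} (hβ : 0 < β) (hβα : β < α) (hα1 : α < 1)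
    (hy : y ∈ Ioo (0 : ℝ) (1 / 2)) :
    g2 α β y * y ^ (-α) ≤ 2 / 3 * (phi β y) ^ (-α) - 2 / 9 * (1 + β - α) := by
  have hα : 0 < α := hβ.trans hβα
  have hy0 : 0 < y := hy.1
  have hv1 := two_mul_rpow_le_one hβ hy
  set v := 2 ^ β * y ^ β with hv
  have hv0 : 0 < v := by positivity
  have h1 : (1 + v) ^ α ≤ 1 + α * v := rpow_one_add_le_one_add_mul_self (by linarith) hα.le hα1.le
  have hd := dphi_pos hβ hy0.le
  have hphi : phi β y = y * (1 + v) := rfl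
  have hx0 : 0 < phi β y := by rw [hphi]; positivity
  have hw : 0 < (1 + v) ^ α := by positivity
  have hdv : dphi β y = 1 + (1 + β) * v := rfl
  -- since `x ≤ 2 y` and `β < α`
  have hxv : (phi β y) ^ α ≤ v := by
    calc (phi β y) ^ α ≤ (2 * y) ^ α := Real.rpow_le_rpow hx0.le (by rw [hphi]; nlinarith) hα.le
      _ ≤ (2 * y) ^ β := Real.rpow_le_rpow_of_exponent_ge (by positivity) (by linarith [hy.2]) hβα.le
      _ = v := Real.mul_rpow (by norm_num) hy0.le
  have h3 : g2 α β y * (1 + v) ^ α ≤ 2 / 3 - 2 / 9 * (1 + β - α) * v := by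
    unfold g2
    rw [div_mul_eq_mul_div, div_le_iff₀ hd, hdv]
    have h4 : 0 ≤ y ^ α := by positivity
    have h5 : (2 - y ^ α) / 3 * (1 + v) ^ α ≤ 2 / 3 * (1 + α * v) := by
      have := rpow_le_one' hα hy
      apply mul_le_mul (by linarith) h1 hw.le (by norm_num)
    have h6 : (1 + β) * v ≤ 2 := by nlinarith
    have h7 : 0 ≤ (1 + β - α) * v := mul_nonneg (by linarith) hv0.le
    nlinarith
  have hy' : y ^ (-α) = (phi β y) ^ (-α) * (1 + v) ^ α := by
    rw [hphi, Real.mul_rpow hy0.le (by positivity), Real.rpow_neg (by positivity : 0 ≤ 1 + v)]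
    field_simp
  have hxx : 0 < (phi β y) ^ (-α) := by positivity
  have h8 : 1 ≤ (phi β y) ^ (-α) * v := by
    calc 1 = (phi β y) ^ (-α) * (phi β y) ^ α := by
          rw [← Real.rpow_add hx0]; simp
      _ ≤ _ := by gcongr
  calc g2 α β y * y ^ (-α) = (phi β y) ^ (-α) * (g2 α β y * (1 + v) ^ α) := by rw [hy']; ring
    _ ≤ (phi β y) ^ (-α) * (2 / 3 - 2 / 9 * (1 + β - α) * v) := by gcongr
    _ = 2 / 3 * (phi β y) ^ (-α) - 2 / 9 * (1 + β - α) * ((phi β y) ^ (-α) * v) := by ring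
    _ ≤ _ := by nlinarith

/-- The densities to which the argument applies: nonnegative decreasing functions on `(0, 1)`
bounded by `B x ^ (-α)`. -/
structure Good (α B : ℝ) (f : ℝ → ℝ) : Prop where
  anti : AntitoneOn f (Ioo 0 1)
  nonneg : ∀ x ∈ Ioo (0 : ℝ) 1, 0 ≤ f x
  le : ∀ x ∈ Ioo (0 : ℝ) 1, f x ≤ B * x ^ (-α)

lemma left_mem {y : ℝ} (hy : y ∈ Ioo (0 : ℝ) (1 / 2)) : y ∈ Ioo (0 : ℝ) 1 :=
  ⟨hy.1, by linarith [hy.2]⟩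

lemma right1_mem {x : ℝ} (hx : x ∈ Ioo (0 : ℝ) 1) : (x + 1) / 2 ∈ Ioo (0 : ℝ) 1 :=
  ⟨by linarith [hx.1], by linarith [hx.2]⟩

lemma right2_mem {x : ℝ} (hx : x ∈ Ioo (0 : ℝ) 1) (h : x < 3 / 4) :
    2 / 3 * x + 1 / 2 ∈ Ioo (0 : ℝ) 1 :=
  ⟨by linarith [hx.1], by linarith⟩

/-- The four branch contributions to the transfer operator are decreasing whenever the density
is. -/
lemma tr_terms_anti {α β B : ℝ} {f : ℝ → ℝ} (hβ : 0 < β) (hβα : β < α) (hα1 : α < 1)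
    (hf : Good α B f) :
    AntitoneOn (fun x => g1 α (psi α x) * f (psi α x)) (Ioo 0 1) ∧
    AntitoneOn (fun x => g2 α β (psi β x) * f (psi β x)) (Ioo 0 1) ∧
    AntitoneOn (fun x => 1 / 6 * f ((x + 1) / 2)) (Ioo 0 1) ∧
    AntitoneOn (fun x => if x < 3 / 4 then 4 / 9 * f (2 / 3 * x + 1 / 2) else 0) (Ioo 0 1) := by
  have hα : 0 < α := hβ.trans hβα
  refine ⟨?_, ?_, ?_, ?_⟩ <;> intro x hx y hy hxy <;> dsimp only
  · have mx := psi_mem hα hx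
    have my := psi_mem hα hy
    have h := psi_monotoneOn hα hx hy hxy
    exact mul_le_mul (g1_antitoneOn hα mx my h) (hf.anti (left_mem mx) (left_mem my) h)
      (hf.nonneg _ (left_mem my)) (by linarith [g1_ge hα hα1 mx])
  · have mx := psi_mem hβ hx
    have my := psi_mem hβ hy
    have h := psi_monotoneOn hβ hx hy hxy
    exact mul_le_mul (g2_antitoneOn hα hβ mx my h) (hf.anti (left_mem mx) (left_mem my) h)
      (hf.nonneg _ (left_mem my)) (g2_nonneg hα hβ mx)
  · have := hf.anti (right1_mem hx) (right1_mem hy) (by linarith)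
    linarith
  · split_ifs with h1 h2 h2
    · have := hf.anti (right2_mem hx h2) (right2_mem hy h1) (by linarith)
      linarith
    · linarith
    · have := hf.nonneg _ (right2_mem hx h2)
      linarith
    · exact le_rfl

lemma tr_terms_nonneg {α β B : ℝ} {f : ℝ → ℝ} (hβ : 0 < β) (hβα : β < α) (hα1 : α < 1)
    (hf : Good α B f) {x : ℝ} (hx : x ∈ Ioo (0 : ℝ) 1) :
    0 ≤ g1 α (psi α x) * f (psi α x) ∧ 0 ≤ g2 α β (psi β x) * f (psi β x) ∧
    0 ≤ 1 / 6 * f ((x + 1) / 2) ∧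
    0 ≤ (if x < 3 / 4 then 4 / 9 * f (2 / 3 * x + 1 / 2) else 0) := by
  have hα : 0 < α := hβ.trans hβα
  refine ⟨?_, ?_, ?_, ?_⟩
  · exact mul_nonneg (by linarith [g1_ge hα hα1 (psi_mem hα hx)])
      (hf.nonneg _ (left_mem (psi_mem hα hx)))
  · exact mul_nonneg (g2_nonneg hα hβ (psi_mem hβ hx))
      (hf.nonneg _ (left_mem (psi_mem hβ hx)))
  · have := hf.nonneg _ (right1_mem hx)
    positivity
  · split_ifs with h
    · have := hf.nonneg _ (right2_mem hx h)
      positivity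
    · exact le_rfl

/-- The transfer operator preserves `Good α B`, provided `f (1/2)` is controlled by `B`. -/
lemma Good.tr {α β B M : ℝ} {f : ℝ → ℝ} (hβ : 0 < β) (hβα : β < α) (hα1 : α < 1)
    (hf : Good α B f) (hM : f (1 / 2) ≤ 2 * M) (hB : 11 * M ≤ 2 * B * (1 + β - α))
    (hB0 : 0 ≤ B) : Good α B (tr α β f) := by
  have hα : 0 < α := hβ.trans hβα
  refine ⟨?_, ?_, ?_⟩
  · intro x hx y hy hxy
    obtain ⟨h1, h2, h3, h4⟩ := tr_terms_anti hβ hβα hα1 hf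
    have h1 := h1 hx hy hxy
    have h2 := h2 hx hy hxy
    have h3 := h3 hx hy hxy
    have h4 := h4 hx hy hxy
    unfold _root_.tr
    dsimp only at h1 h2 h3 h4
    linarith
  · intro x hx
    obtain ⟨h1, h2, h3, h4⟩ := tr_terms_nonneg hβ hβα hα1 hf hx
    unfold _root_.tr
    linarith
  · intro x hx
    have hh : (1 / 2 : ℝ) ∈ Ioo (0 : ℝ) 1 := by norm_num
    have hM0 : 0 ≤ f (1 / 2) := hf.nonneg _ hh
    have m1 := psi_mem hα hx
    have m2 := psi_mem hβ hx
    have h1 := g1_bound hα hα1 m1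
    have h2 := g2_bound hβ hβα hα1 m2
    rw [phi_psi hα hx] at h1
    rw [phi_psi hβ hx] at h2
    have k1 : g1 α (psi α x) * f (psi α x) ≤ B * (1 / 3 * x ^ (-α)) := by
      calc _ ≤ g1 α (psi α x) * (B * (psi α x) ^ (-α)) :=
            mul_le_mul_of_nonneg_left (hf.le _ (left_mem m1)) (by linarith [g1_ge hα hα1 m1])
        _ = B * (g1 α (psi α x) * (psi α x) ^ (-α)) := by ring
        _ ≤ _ := by gcongr
    have k2 : g2 α β (psi β x) * f (psi β x)
        ≤ B * (2 / 3 * x ^ (-α) - 2 / 9 * (1 + β - α)) := by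
      calc _ ≤ g2 α β (psi β x) * (B * (psi β x) ^ (-α)) :=
            mul_le_mul_of_nonneg_left (hf.le _ (left_mem m2)) (g2_nonneg hα hβ m2)
        _ = B * (g2 α β (psi β x) * (psi β x) ^ (-α)) := by ring
        _ ≤ _ := by gcongr
    have k3 : 1 / 6 * f ((x + 1) / 2) ≤ 1 / 6 * f (1 / 2) := by
      have := hf.anti hh (right1_mem hx) (by linarith [hx.1])
      linarith
    have k4 : (if x < 3 / 4 then 4 / 9 * f (2 / 3 * x + 1 / 2) else 0) ≤ 4 / 9 * f (1 / 2) := by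
      split_ifs with h
      · have := hf.anti hh (right2_mem hx h) (by linarith [hx.1])
        linarith
      · positivity
    unfold _root_.tr
    nlinarith

/-- A lower bound on `(0, s)` propagates to the longer interval `(0, q s)`: the left branch of `T1`
moves every `y ≥ δ` to the right by the factor `q = 1 + (2δ)^α` at least. -/
lemma tr_lower {α β B c δ s : ℝ} {f : ℝ → ℝ} (hβ : 0 < β) (hβα : β < α) (hα1 : α < 1)
    (hf : Good α B f) (hc : 0 ≤ c) (hδ : 0 < δ) (hδs : δ ≤ s)
    (h : ∀ x ∈ Ioo (0 : ℝ) 1, x < s → c ≤ f x) :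
    ∀ x ∈ Ioo (0 : ℝ) 1, x < s * (1 + 2 ^ α * δ ^ α) → c / 9 ≤ tr α β f x := by
  have hα : 0 < α := hβ.trans hβα
  intro x hx hxs
  have m1 := psi_mem hα hx
  obtain ⟨h1, h2, h3, h4⟩ := tr_terms_nonneg hβ hβα hα1 hf hx
  have hy : psi α x < s := by
    by_contra! hsy
    have e := phi_psi hα hx
    unfold phi at e
    have : δ ^ α ≤ (psi α x) ^ α := Real.rpow_le_rpow hδ.le (hδs.trans hsy) hα.le
    have h5 : s * (1 + 2 ^ α * δ ^ α) ≤ psi α x * (1 + 2 ^ α * (psi α x) ^ α) := by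
      have : 0 < δ ^ α := by positivity
      gcongr
      exact m1.1.le
    linarith
  have h6 := h _ (left_mem m1) hy
  have h7 : 1 / 9 * c ≤ g1 α (psi α x) * f (psi α x) :=
    mul_le_mul (g1_ge hα hα1 m1) h6 hc (by linarith [g1_ge hα hα1 m1])
  unfold tr
  linarith

/-! ### The random map acting on measures with a density -/

lemma mI_eq : mI = volume.restrict (Ioo 0 1) := by
  unfold mI
  exact Measure.restrict_congr_set Ioo_ae_eq_Icc.symm

lemma ae_mI {p : ℝ → Prop} (h : ∀ x ∈ Ioo (0 : ℝ) 1, p x) : ∀ᵐ x ∂mI, p x := by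
  rw [mI_eq, ae_restrict_iff' measurableSet_Ioo]
  exact Filter.Eventually.of_forall h

instance : IsProbabilityMeasure mI := ⟨by simp [mI_eq]⟩

/-- The measure on `[0, 1]` with density `f` (its negative part being ignored). -/
def dens (f : ℝ → ℝ) : Measure ℝ := mI.withDensity fun x => ENNReal.ofReal (f x)

lemma dens_congr {f g : ℝ → ℝ} (h : ∀ x ∈ Ioo (0 : ℝ) 1, f x = g x) : dens f = dens g :=
  withDensity_congr_ae (ae_mI fun x hx => by dsimp only; rw [h x hx])

lemma dens_add {f g : ℝ → ℝ} (hf : AEMeasurable f mI) (hf0 : ∀ x ∈ Ioo (0 : ℝ) 1, 0 ≤ f x)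
    (hg0 : ∀ x ∈ Ioo (0 : ℝ) 1, 0 ≤ g x) : dens (fun x => f x + g x) = dens f + dens g := by
  ext s hs
  rw [Measure.add_apply, dens, dens, dens, withDensity_apply _ hs, withDensity_apply _ hs,
    withDensity_apply _ hs, ← lintegral_add_left' hf.ennreal_ofReal.restrict]
  refine lintegral_congr_ae (ae_restrict_of_ae (ae_mI fun x hx => ?_))
  exact ENNReal.ofReal_add (hf0 x hx) (hg0 x hx)

lemma aemeasurable_of_anti {f : ℝ → ℝ} (h : AntitoneOn f (Ioo 0 1)) : AEMeasurable f mI := by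
  rw [mI_eq]
  exact aemeasurable_restrict_of_antitoneOn measurableSet_Ioo h

/-- Push-forward of a density along one branch `T : s → t` with inverse `ψ`. -/
lemma map_branch {T d ψ : ℝ → ℝ} (hT : Measurable T) {s t : Set ℝ} (hs : MeasurableSet s)
    (him : T '' s = t) (hd : ∀ x ∈ s, HasDerivWithinAt T (d x) s x) (hd0 : ∀ x ∈ s, 0 < d x)
    (hψ : ∀ x ∈ s, ψ (T x) = x) (k : ℝ → ℝ) :
    ((volume.restrict s).withDensity fun x => ENNReal.ofReal (k x)).map T
      = (volume.restrict t).withDensity fun x => ENNReal.ofReal (k (ψ x) / d (ψ x)) := by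
  ext A hA
  have hinj : InjOn T s := fun x hx y hy h => by rw [← hψ x hx, ← hψ y hy, h]
  have hm : MeasurableSet (T ⁻¹' A ∩ s) := (hT hA).inter hs
  have e : A ∩ t = T '' (T ⁻¹' A ∩ s) := by rw [image_preimage_inter, him]
  rw [Measure.map_apply hT hA, withDensity_apply _ (hT hA), withDensity_apply _ hA,
    Measure.restrict_restrict (hT hA), Measure.restrict_restrict hA, e,
    lintegral_image_eq_lintegral_abs_deriv_mul hm
      (fun x hx => (hd x hx.2).mono inter_subset_right) (hinj.mono inter_subset_right)]
  refine setLIntegral_congr_fun hm fun x hx => ?_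
  have h0 := hd0 x hx.2
  rw [hψ x hx.2, abs_of_pos h0, ← ENNReal.ofReal_mul h0.le]
  congr 1
  field_simp

/-- The first map of the random system. -/
def T1 (α x : ℝ) : ℝ := if x < 1 / 2 then x * (1 + 2 ^ α * x ^ α) else 2 * x - 1

/-- The second map of the random system. -/
def T2 (β x : ℝ) : ℝ := if x < 1 / 2 then x * (1 + 2 ^ β * x ^ β) else 3 / 2 * x - 3 / 4

/-- The probability of applying `T1`. -/
def P1 (α x : ℝ) : ℝ := if x < 1 / 2 then (1 + x ^ α) / 3 else 1 / 3

/-- The probability of applying `T2`. -/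
def P2 (α x : ℝ) : ℝ := if x < 1 / 2 then (2 - x ^ α) / 3 else 2 / 3

/-- The action of the random system on measures. -/
def EE (α β : ℝ) (ν : Measure ℝ) : Measure ℝ := ET (T1 α) (T2 β) (P1 α) (P2 α) ν

lemma T1_meas (α : ℝ) : Measurable (T1 α) := by
  unfold T1
  exact Measurable.ite measurableSet_Iio (by fun_prop) (by fun_prop)

lemma T2_meas (β : ℝ) : Measurable (T2 β) := by
  unfold T2
  exact Measurable.ite measurableSet_Iio (by fun_prop) (by fun_prop)

lemma P1_meas (α : ℝ) : Measurable (P1 α) := by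
  unfold P1
  exact Measurable.ite measurableSet_Iio (by fun_prop) (by fun_prop)

lemma P2_meas (α : ℝ) : Measurable (P2 α) := by
  unfold P2
  exact Measurable.ite measurableSet_Iio (by fun_prop) (by fun_prop)

lemma P1_nonneg {α x : ℝ} (hx : x ∈ Ioo (0 : ℝ) 1) : 0 ≤ P1 α x := by
  have := Real.rpow_nonneg hx.1.le α
  unfold P1
  split_ifs <;> positivity

lemma P2_nonneg {α x : ℝ} (hα : 0 < α) (hx : x ∈ Ioo (0 : ℝ) 1) : 0 ≤ P2 α x := by
  have := Real.rpow_le_one hx.1.le hx.2.le hα.le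
  unfold P2
  split_ifs
  · linarith
  · positivity

lemma P1_add_P2 (α x : ℝ) : P1 α x + P2 α x = 1 := by
  unfold P1 P2
  split_ifs <;> ring

lemma mI_split : mI = volume.restrict (Ioo 0 (1 / 2)) + volume.restrict (Ioo (1 / 2) 1) := by
  have h : volume.restrict (Ioo (1 / 2 : ℝ) 1) = volume.restrict (Ico (1 / 2 : ℝ) 1) :=
    Measure.restrict_congr_set Ioo_ae_eq_Ico
  rw [h, mI_eq, ← Measure.restrict_union _ measurableSet_Ico,
    Ioo_union_Ico_eq_Ioo (by norm_num) (by norm_num)]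
  exact Set.disjoint_left.2 fun x hx hy => absurd hx.2 (not_lt.2 hy.1)

lemma image_affine_Ioo {T : ℝ → ℝ} {a b c d m : ℝ} (hm : 0 < m)
    (hT : ∀ x ∈ Ioo a b, T x = m * x + c) (h : d = m * a + c) :
    T '' Ioo a b = Ioo d (m * b + c) := by
  ext y
  constructor
  · rintro ⟨x, hx, rfl⟩
    rw [hT x hx, h]
    exact ⟨by nlinarith [hx.1], by nlinarith [hx.2]⟩
  · rintro ⟨h1, h2⟩
    have hx : (y - c) / m ∈ Ioo a b :=
      ⟨by rw [lt_div_iff₀ hm]; linarith, by rw [div_lt_iff₀ hm]; linarith⟩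
    exact ⟨_, hx, by rw [hT _ hx]; field_simp; ring⟩

lemma map_left {T p d ψ f : ℝ → ℝ} {a : ℝ} (ha : 0 < a) (hT : Measurable T)
    (hTe : ∀ x, x < 1 / 2 → T x = phi a x) (hd : d = dphi a) (hψ : ψ = psi a) :
    ((volume.restrict (Ioo 0 (1 / 2))).withDensity fun x => ENNReal.ofReal (p x * f x)).map T
      = dens fun x => p (ψ x) / d (ψ x) * f (ψ x) := by
  subst hd hψ
  have heq : EqOn T (phi a) (Ioo 0 (1 / 2)) := fun x hx => hTe x hx.2
  rw [map_branch (t := Ioo 0 1) (d := dphi a) (ψ := psi a) hT measurableSet_Ioo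
    (by rw [heq.image_eq]; exact phi_image ha)
    (fun x hx => ((phi_hasDerivAt hx.1).hasDerivWithinAt).congr heq (heq hx))
    (fun x hx => dphi_pos ha hx.1.le) (fun x hx => by rw [heq hx, psi_phi ha hx]),
    dens, mI_eq]
  congr 1
  ext x
  congr 1
  ring

lemma map_right {T p f : ℝ → ℝ} {m c r : ℝ} (hm : 0 < m) (hT : Measurable T)
    (hTe : ∀ x, 1 / 2 < x → T x = m * x + c) (h0 : 0 = m * (1 / 2) + c) (hr : r = m * 1 + c) :
    ((volume.restrict (Ioo (1 / 2) 1)).withDensity fun x => ENNReal.ofReal (p x * f x)).map T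
      = (volume.restrict (Ioo 0 r)).withDensity fun x =>
        ENNReal.ofReal (p ((x - c) / m) * f ((x - c) / m) / m) := by
  subst hr
  have heq : EqOn T (fun x => m * x + c) (Ioo (1 / 2) 1) := fun x hx => hTe x hx.1
  refine map_branch (d := fun _ => m) (ψ := fun x => (x - c) / m) hT measurableSet_Ioo
    (image_affine_Ioo hm heq h0) (fun x hx => ?_) (fun _ _ => hm) (fun x hx => ?_) _
  · have := ((hasDerivAt_id x).const_mul m).add_const c
    rw [mul_one] at this
    exact this.hasDerivWithinAt.congr heq (heq hx)
  · rw [heq hx]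
    field_simp
    ring

/-- `tr` represents the action of the random map on measures with a good density. -/
lemma EE_dens {α β B : ℝ} {f : ℝ → ℝ} (hβ : 0 < β) (hβα : β < α) (hα1 : α < 1)
    (hf : Good α B f) : EE α β (dens f) = dens (tr α β f) := by
  have hα : 0 < α := hβ.trans hβα
  have hfm := aemeasurable_of_anti hf.anti
  have key : ∀ p : ℝ → ℝ, Measurable p → (∀ x ∈ Ioo (0 : ℝ) 1, 0 ≤ p x) →
      (dens f).withDensity (fun x => ENNReal.ofReal (p x))
        = (volume.restrict (Ioo 0 (1 / 2))).withDensity (fun x => ENNReal.ofReal (p x * f x))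
        + (volume.restrict (Ioo (1 / 2) 1)).withDensity fun x => ENNReal.ofReal (p x * f x) := by
    intro p hp hp0
    rw [← withDensity_add_measure, ← mI_split, dens,
      ← withDensity_mul₀ hfm.ennreal_ofReal hp.ennreal_ofReal.aemeasurable]
    refine withDensity_congr_ae (ae_mI fun x hx => ?_)
    dsimp only
    rw [Pi.mul_apply, mul_comm, ENNReal.ofReal_mul (hp0 x hx)]
  obtain ⟨a1, a2, a3, a4⟩ := tr_terms_anti hβ hβα hα1 hf
  have hn := fun x hx => tr_terms_nonneg hβ hβα hα1 hf (x := x) hx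
  have e1 : ((volume.restrict (Ioo 0 (1 / 2))).withDensity
        fun x => ENNReal.ofReal (P1 α x * f x)).map (T1 α)
      = dens fun x => g1 α (psi α x) * f (psi α x) := by
    rw [map_left (a := α) hα (T1_meas α) (fun x hx => by simp only [T1, hx, if_true, phi]) rfl rfl]
    refine dens_congr fun x hx => ?_
    rw [P1, if_pos (psi_mem hα hx).2, g1]
  have e2 : ((volume.restrict (Ioo 0 (1 / 2))).withDensity
        fun x => ENNReal.ofReal (P2 α x * f x)).map (T2 β)
      = dens fun x => g2 α β (psi β x) * f (psi β x) := by
    rw [map_left (a := β) hβ (T2_meas β) (fun x hx => by simp only [T2, hx, if_true, phi]) rfl rfl]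
    refine dens_congr fun x hx => ?_
    rw [P2, if_pos (psi_mem hβ hx).2, g2]
  have e3 : ((volume.restrict (Ioo (1 / 2) 1)).withDensity
        fun x => ENNReal.ofReal (P1 α x * f x)).map (T1 α)
      = dens fun x => 1 / 6 * f ((x + 1) / 2) := by
    rw [map_right (m := 2) (c := -1) (r := 1) (by norm_num) (T1_meas α)
      (fun x hx => by rw [T1, if_neg (not_lt.2 hx.le)]; ring) (by norm_num) (by norm_num),
      ← mI_eq]
    refine dens_congr fun x hx => ?_
    rw [P1, if_neg (by linarith [hx.1]), sub_neg_eq_add]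
    ring
  have e4 : ((volume.restrict (Ioo (1 / 2) 1)).withDensity
        fun x => ENNReal.ofReal (P2 α x * f x)).map (T2 β)
      = dens fun x => if x < 3 / 4 then 4 / 9 * f (2 / 3 * x + 1 / 2) else 0 := by
    rw [map_right (m := 3 / 2) (c := -(3 / 4)) (r := 3 / 4) (by norm_num) (T2_meas β)
      (fun x hx => by rw [T2, if_neg (not_lt.2 hx.le)]; ring) (by norm_num) (by norm_num)]
    have hI : volume.restrict (Ioo (0 : ℝ) (3 / 4)) = mI.restrict (Ioo 0 (3 / 4)) := by
      rw [mI_eq, Measure.restrict_restrict measurableSet_Ioo,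
        inter_eq_left.2 (Ioo_subset_Ioo_right (by norm_num))]
    rw [hI, ← withDensity_indicator measurableSet_Ioo, dens]
    refine withDensity_congr_ae (ae_mI fun x hx => ?_)
    dsimp only
    by_cases h : x < 3 / 4
    · rw [indicator_of_mem (show x ∈ Ioo (0 : ℝ) (3 / 4) from ⟨hx.1, h⟩), if_pos h, P2,
        if_neg (by linarith [hx.1])]
      have : (x - -(3 / 4)) / (3 / 2) = 2 / 3 * x + 1 / 2 := by ring
      rw [this]
      congr 1
      ring
    · rw [indicator_of_notMem (fun h' => h h'.2), if_neg h, ENNReal.ofReal_zero]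
  rw [EE, ET, key _ (P1_meas α) (fun x hx => P1_nonneg hx),
    key _ (P2_meas α) (fun x hx => P2_nonneg hα hx), Measure.map_add _ _ (T1_meas α),
    Measure.map_add _ _ (T2_meas β), e1, e2, e3, e4]
  have hsum : dens (tr α β f) = dens (fun x => g1 α (psi α x) * f (psi α x))
      + dens (fun x => g2 α β (psi β x) * f (psi β x)) + dens (fun x => 1 / 6 * f ((x + 1) / 2))
      + dens (fun x => if x < 3 / 4 then 4 / 9 * f (2 / 3 * x + 1 / 2) else 0) := by
    have m1 := aemeasurable_of_anti a1
    have m2 := aemeasurable_of_anti a2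
    have m3 := aemeasurable_of_anti a3
    have m12 : AEMeasurable (fun x => g1 α (psi α x) * f (psi α x)
        + g2 α β (psi β x) * f (psi β x)) mI := m1.add m2
    have m123 : AEMeasurable (fun x => g1 α (psi α x) * f (psi α x)
        + g2 α β (psi β x) * f (psi β x) + 1 / 6 * f ((x + 1) / 2)) mI := m12.add m3
    rw [← dens_add m1 (fun x hx => (hn x hx).1) (fun x hx => (hn x hx).2.1),
      ← dens_add m12 (fun x hx => add_nonneg (hn x hx).1 (hn x hx).2.1)
        (fun x hx => (hn x hx).2.2.1),
      ← dens_add m123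
        (fun x hx => add_nonneg (add_nonneg (hn x hx).1 (hn x hx).2.1) (hn x hx).2.2.1)
        (fun x hx => (hn x hx).2.2.2)]
    rfl
  rw [hsum]
  abel

lemma EE_add (α β : ℝ) (μ ν : Measure ℝ) : EE α β (μ + ν) = EE α β μ + EE α β ν := by
  simp only [EE, ET, withDensity_add_measure, Measure.map_add _ _ (T1_meas α),
    Measure.map_add _ _ (T2_meas β)]
  abel

lemma EE_univ {α β : ℝ} (hα : 0 < α) {μ : Measure ℝ} (hμ : μ ≪ mI) :
    EE α β μ univ = μ univ := by
  rw [EE, ET, Measure.add_apply, Measure.map_apply (T1_meas α) .univ,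
    Measure.map_apply (T2_meas β) .univ, preimage_univ, preimage_univ,
    withDensity_apply _ .univ, withDensity_apply _ .univ,
    ← lintegral_add_left (P1_meas α).ennreal_ofReal, Measure.restrict_univ,
    ← lintegral_one]
  refine lintegral_congr_ae (hμ.ae_le (ae_mI fun x hx => ?_))
  dsimp only
  rw [← ENNReal.ofReal_add (P1_nonneg hx) (P2_nonneg hα hx), P1_add_P2, ENNReal.ofReal_one]

/-! ### The coupling argument -/

lemma dens_ac (f : ℝ → ℝ) : dens f ≪ mI := withDensity_absolutelyContinuous _ _

lemma dens_univ (f : ℝ → ℝ) : dens f univ = ∫⁻ x, ENNReal.ofReal (f x) ∂mI := by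
  rw [dens, withDensity_apply _ .univ, Measure.restrict_univ]

lemma dens_const_univ (c : ℝ) : dens (fun _ => c) univ = ENNReal.ofReal c := by
  rw [dens_univ]
  simp

/-- Measures with a good density and mass at most `M`. -/
def GoodMeas (α B M : ℝ) : Set (Measure ℝ) :=
  {μ | ∃ f, Good α B f ∧ μ = dens f ∧ μ univ ≤ ENNReal.ofReal M}

lemma GoodMeas.ac {α B M : ℝ} {μ : Measure ℝ} (h : μ ∈ GoodMeas α B M) : μ ≪ mI := by
  obtain ⟨f, -, rfl, -⟩ := h
  exact dens_ac f

lemma GoodMeas.univ_ne_top {α B M : ℝ} {μ : Measure ℝ} (h : μ ∈ GoodMeas α B M) :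
    μ univ ≠ ⊤ := by
  obtain ⟨f, -, -, h⟩ := h
  exact ne_top_of_le_ne_top ENNReal.ofReal_ne_top h

/-- A decreasing density of mass at most `M` is at most `2 M` at `1/2`. -/
lemma Good.half_le {α B M : ℝ} {f : ℝ → ℝ} (hf : Good α B f) (hM0 : 0 ≤ M)
    (hM : dens f univ ≤ ENNReal.ofReal M) : f (1 / 2) ≤ 2 * M := by
  have h1 : ∫⁻ x in Ioo (0 : ℝ) (1 / 2), ENNReal.ofReal (f (1 / 2)) ∂mI ≤ dens f univ := by
    rw [dens_univ]
    refine le_trans ?_ (setLIntegral_le_lintegral (Ioo (0 : ℝ) (1 / 2)) _)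
    refine setLIntegral_mono' measurableSet_Ioo fun x hx => ENNReal.ofReal_le_ofReal ?_
    exact hf.anti (left_mem hx) (by norm_num) hx.2.le
  have h2 : mI (Ioo (0 : ℝ) (1 / 2)) = ENNReal.ofReal (1 / 2) := by
    rw [mI_eq, Measure.restrict_apply measurableSet_Ioo,
      inter_eq_left.2 (Ioo_subset_Ioo_right (by norm_num)), Real.volume_Ioo, sub_zero]
  rw [setLIntegral_const, h2,
    ← ENNReal.ofReal_mul (hf.nonneg _ (by norm_num : (1 / 2 : ℝ) ∈ Ioo (0 : ℝ) 1))] at h1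
  have h3 := (ENNReal.ofReal_le_ofReal_iff hM0).1 (h1.trans hM)
  linarith

/-- `GoodMeas α B M` is invariant under the random map once `B` is large compared with `M`; the
densities transform by `tr`. -/
lemma Good.iterate {α β B M : ℝ} {f : ℝ → ℝ} (hβ : 0 < β) (hβα : β < α) (hα1 : α < 1)
    (hM0 : 0 ≤ M) (hB0 : 0 ≤ B) (hB : 11 * M ≤ 2 * B * (1 + β - α)) (hf : Good α B f)
    (hM : dens f univ ≤ ENNReal.ofReal M) (k : ℕ) :
    Good α B ((_root_.tr α β)^[k] f) ∧ (EE α β)^[k] (dens f) = dens ((_root_.tr α β)^[k] f) ∧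
      dens ((_root_.tr α β)^[k] f) univ ≤ ENNReal.ofReal M := by
  induction k with
  | zero => exact ⟨hf, rfl, hM⟩
  | succ k ih =>
    obtain ⟨h1, h2, h3⟩ := ih
    rw [Function.iterate_succ_apply', Function.iterate_succ_apply', h2]
    have e := EE_dens hβ hβα hα1 h1
    refine ⟨h1.tr hβ hβα hα1 (h1.half_le hM0 h3) hB hB0, e, ?_⟩
    rw [← e, EE_univ (hβ.trans hβα) (dens_ac _)]
    exact h3

lemma GoodMeas.iterate {α β B M : ℝ} (hβ : 0 < β) (hβα : β < α) (hα1 : α < 1)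
    (hM0 : 0 ≤ M) (hB0 : 0 ≤ B) (hB : 11 * M ≤ 2 * B * (1 + β - α)) {μ : Measure ℝ}
    (hμ : μ ∈ GoodMeas α B M) (k : ℕ) : (EE α β)^[k] μ ∈ GoodMeas α B M := by
  obtain ⟨f, hf, rfl, hM⟩ := hμ
  obtain ⟨h1, h2, h3⟩ := hf.iterate hβ hβα hα1 hM0 hB0 hB hM k
  exact ⟨_, h1, h2, h2 ▸ h3⟩

/-- A good density of mass at least `ε` is at least `ε / 2` near `0`: the bound `B x ^ (-α)` keeps
the mass from concentrating at `0`. -/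
lemma exists_delta {α : ℝ} (B : ℝ) (hα1 : α < 1) {ε : ℝ} (hε : 0 < ε) :
    ∃ δ ∈ Ioo (0 : ℝ) 1, ∀ f, Good α B f → ENNReal.ofReal ε ≤ dens f univ → ε / 2 ≤ f δ := by
  have hIntg : ∫⁻ x, ENNReal.ofReal (B * x ^ (-α)) ∂mI ≠ ⊤ := by
    have h1 : IntervalIntegrable (fun x : ℝ => B * x ^ (-α)) volume 0 1 :=
      (intervalIntegral.intervalIntegrable_rpow' (by linarith)).const_mul B
    have h2 : Integrable (fun x : ℝ => B * x ^ (-α)) mI := by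
      rw [mI_eq]
      exact ((intervalIntegrable_iff_integrableOn_Ioo_of_le zero_le_one).1 h1)
    exact h2.lintegral_lt_top.ne
  obtain ⟨η, hη, H⟩ := exists_pos_setLIntegral_lt_of_measure_lt hIntg
    (ε := ENNReal.ofReal (ε / 2)) (by simpa using hε)
  obtain ⟨r, hr0, hr⟩ := ENNReal.lt_iff_exists_real_btwn.1 hη
  have hr1 : 0 < r := by simpa using hr.1
  refine ⟨min r (1 / 2), ⟨by positivity, (min_le_right _ _).trans_lt (by norm_num)⟩, ?_⟩
  set δ := min r (1 / 2) with hδ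
  have hδ1 : δ ∈ Ioo (0 : ℝ) 1 := ⟨by positivity, (min_le_right _ _).trans_lt (by norm_num)⟩
  intro f hf hm
  have hsmall := H (Ioo 0 δ) (by
    rw [mI_eq]
    refine (Measure.restrict_apply_le _ _).trans_lt ?_
    rw [Real.volume_Ioo, sub_zero]
    exact (ENNReal.ofReal_le_ofReal (min_le_left _ _)).trans_lt hr.2)
  have hle : dens f univ ≤ ∫⁻ x in Ioo 0 δ, ENNReal.ofReal (B * x ^ (-α)) ∂mI
      + ENNReal.ofReal (f δ) := by
    have e : ENNReal.ofReal (f δ) = ∫⁻ _, ENNReal.ofReal (f δ) ∂mI := by simp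
    rw [dens_univ, ← lintegral_indicator measurableSet_Ioo, e,
      ← lintegral_add_right _ measurable_const]
    refine lintegral_mono_ae (ae_mI fun x hx => ?_)
    by_cases h : x < δ
    · rw [indicator_of_mem (show x ∈ Ioo 0 δ from ⟨hx.1, h⟩)]
      exact (ENNReal.ofReal_le_ofReal (hf.le x hx)).trans le_self_add
    · refine (ENNReal.ofReal_le_ofReal (hf.anti hδ1 hx (not_lt.1 h))).trans le_add_self
  by_contra! hlt
  have h2 := (hm.trans hle).trans_lt (ENNReal.add_lt_add_of_lt_of_le (by simp) hsmall
    (ENNReal.ofReal_le_ofReal hlt.le))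
  rw [← ENNReal.ofReal_add (by positivity) (by positivity), add_halves] at h2
  exact lt_irrefl _ h2

/-- After a number of steps depending only on the mass `ε`, every measure in `GoodMeas α B M` of
mass at least `ε` splits off a fixed multiple of Lebesgue measure, and the remainder is again
in `GoodMeas α B M`. -/
lemma minorization {α β B M : ℝ} (hβ : 0 < β) (hβα : β < α) (hα1 : α < 1)
    (hM0 : 0 ≤ M) (hB0 : 0 ≤ B) (hB : 11 * M ≤ 2 * B * (1 + β - α)) {ε : ℝ} (hε : 0 < ε) :
    ∃ K : ℕ, ∃ c : ℝ, 0 < c ∧ ∀ μ ∈ GoodMeas α B M, ENNReal.ofReal ε ≤ μ univ →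
      ∃ μ' ∈ GoodMeas α B M, (EE α β)^[K] μ = dens (fun _ => c) + μ' := by
  obtain ⟨δ, hδ, H⟩ := exists_delta B hα1 hε
  have hδ0 : 0 < δ := hδ.1
  set q : ℝ := 1 + 2 ^ α * δ ^ α with hq
  have hq1 : 1 < q := by
    have : 0 < 2 ^ α * δ ^ α := by positivity
    linarith
  obtain ⟨K, hK⟩ := pow_unbounded_of_one_lt (1 / δ) hq1
  have hK1 : 1 < δ * q ^ K := by
    rw [div_lt_iff₀ hδ0] at hK
    linarith
  refine ⟨K, ε / 2 / 9 ^ K, by positivity, ?_⟩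
  rintro _ ⟨f, hf, rfl, hM⟩ hm
  have hit := hf.iterate hβ hβα hα1 hM0 hB0 hB hM
  have hlow : ∀ k : ℕ, ∀ x ∈ Ioo (0 : ℝ) 1, x < δ * q ^ k →
      ε / 2 / 9 ^ k ≤ (tr α β)^[k] f x := by
    intro k
    induction k with
    | zero =>
      intro x hx hxδ
      simp only [pow_zero, mul_one, div_one] at *
      exact (H f hf hm).trans (hf.anti hx hδ hxδ.le)
    | succ k ih =>
      intro x hx hxδ
      rw [Function.iterate_succ_apply', pow_succ, ← div_div]
      refine tr_lower hβ hβα hα1 (hit k).1 (by positivity) hδ0 ?_ ih x hx ?_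
      · exact le_mul_of_one_le_right hδ0.le (one_le_pow₀ hq1.le)
      · rw [pow_succ, ← mul_assoc] at hxδ
        exact hxδ
  set c := ε / 2 / 9 ^ K with hc
  have hc0 : 0 < c := by positivity
  obtain ⟨h1, h2, h3⟩ := hit K
  set F := (tr α β)^[K] f with hF
  have hcF : ∀ x ∈ Ioo (0 : ℝ) 1, c ≤ F x := fun x hx => hlow K x hx (hx.2.trans hK1)
  have e : dens F = dens (fun _ => c) + dens (fun x => F x - c) := by
    rw [← dens_add aemeasurable_const (fun _ _ => hc0.le) (fun x hx => sub_nonneg.2 (hcF x hx))]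
    exact dens_congr fun x _ => by ring
  refine ⟨dens fun x => F x - c, ⟨_, ⟨?_, ?_, ?_⟩, rfl, ?_⟩, h2.trans e⟩
  · intro x hx y hy hxy
    exact sub_le_sub_right (h1.anti hx hy hxy) c
  · exact fun x hx => sub_nonneg.2 (hcF x hx)
  · exact fun x hx => (sub_le_self _ hc0.le).trans (h1.le x hx)
  · refine le_trans ?_ h3
    rw [e, Measure.add_apply]
    exact le_add_self

lemma EE_iter_add (α β : ℝ) (n : ℕ) (μ ν : Measure ℝ) :
    (EE α β)^[n] (μ + ν) = (EE α β)^[n] μ + (EE α β)^[n] ν := by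
  induction n with
  | zero => rfl
  | succ n ih => simp only [Function.iterate_succ_apply', ih, EE_add]

/-- Uniform coupling: after `N` steps any two measures in `GoodMeas α B M` share a common part such
that one of the two remainders has mass at most `ε`. -/
lemma coupling {α β B M : ℝ} (hβ : 0 < β) (hβα : β < α) (hα1 : α < 1)
    (hM0 : 0 ≤ M) (hB0 : 0 ≤ B) (hB : 11 * M ≤ 2 * B * (1 + β - α)) {ε : ℝ} (hε : 0 < ε) :
    ∃ N : ℕ, ∀ μ ∈ GoodMeas α B M, ∀ ν ∈ GoodMeas α B M, ∃ κ v w : Measure ℝ,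
      (EE α β)^[N] μ = κ + v ∧ (EE α β)^[N] ν = κ + w ∧ v ∈ GoodMeas α B M ∧
      w ∈ GoodMeas α B M ∧ (v univ ≤ ENNReal.ofReal ε ∨ w univ ≤ ENNReal.ofReal ε) := by
  have hα : 0 < α := hβ.trans hβα
  obtain ⟨K, c, hc, H⟩ := minorization hβ hβα hα1 hM0 hB0 hB hε
  have hit := fun {μ : Measure ℝ} (hμ : μ ∈ GoodMeas α B M) =>
    GoodMeas.iterate hβ hβα hα1 hM0 hB0 hB hμ K
  have hmass : ∀ μ ∈ GoodMeas α B M, (EE α β)^[K] μ univ = μ univ := by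
    intro μ hμ
    have : ∀ k : ℕ, (EE α β)^[k] μ univ = μ univ := by
      intro k
      induction k with
      | zero => rfl
      | succ k ih =>
        rw [Function.iterate_succ_apply',
          EE_univ hα (GoodMeas.ac (GoodMeas.iterate hβ hβα hα1 hM0 hB0 hB hμ k)), ih]
    exact this K
  -- each round of `K` steps either has already produced a small remainder or removes mass `c`
  have step : ∀ j : ℕ, ∀ μ ∈ GoodMeas α B M, ∀ ν ∈ GoodMeas α B M, ∃ κ v w : Measure ℝ,
      (EE α β)^[K * j] μ = κ + v ∧ (EE α β)^[K * j] ν = κ + w ∧ v ∈ GoodMeas α B M ∧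
      w ∈ GoodMeas α B M ∧ (v univ ≤ ENNReal.ofReal ε ∨ w univ ≤ ENNReal.ofReal ε ∨
        v univ + ENNReal.ofReal (c * j) ≤ ENNReal.ofReal M) := by
    intro j μ hμ ν hν
    induction j with
    | zero =>
      refine ⟨0, μ, ν, by simp, by simp, hμ, hν, Or.inr (Or.inr ?_)⟩
      obtain ⟨f, -, -, h⟩ := hμ
      simpa using h
    | succ j ih =>
      obtain ⟨κ, v, w, h1, h2, hv, hw, h⟩ := ih
      have e1 : (EE α β)^[K * (j + 1)] μ = (EE α β)^[K] κ + (EE α β)^[K] v := by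
        rw [mul_add, mul_one, add_comm, Function.iterate_add_apply, h1, EE_iter_add]
      have e2 : (EE α β)^[K * (j + 1)] ν = (EE α β)^[K] κ + (EE α β)^[K] w := by
        rw [mul_add, mul_one, add_comm, Function.iterate_add_apply, h2, EE_iter_add]
      by_cases hv' : v univ ≤ ENNReal.ofReal ε
      · exact ⟨_, _, _, e1, e2, hit hv, hit hw, Or.inl (by rwa [hmass v hv])⟩
      by_cases hw' : w univ ≤ ENNReal.ofReal ε
      · exact ⟨_, _, _, e1, e2, hit hv, hit hw, Or.inr (Or.inl (by rwa [hmass w hw]))⟩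
      have h := (h.resolve_left hv').resolve_left hw'
      obtain ⟨v', hv1, hv2⟩ := H v hv (not_le.1 hv').le
      obtain ⟨w', hw1, hw2⟩ := H w hw (not_le.1 hw').le
      refine ⟨(EE α β)^[K] κ + dens (fun _ => c), v', w', by rw [e1, hv2, add_assoc],
        by rw [e2, hw2, add_assoc], hv1, hw1, Or.inr (Or.inr ?_)⟩
      have h5 := hmass v hv
      rw [hv2, Measure.add_apply, dens_const_univ] at h5
      rw [← h5] at h
      have h6 : ENNReal.ofReal (c * ((j + 1 : ℕ) : ℝ))
          = ENNReal.ofReal c + ENNReal.ofReal (c * j) := by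
        rw [← ENNReal.ofReal_add hc.le (by positivity)]
        congr 1
        push_cast
        ring
      rw [h6, ← add_assoc, add_comm (v' univ)]
      exact h
  obtain ⟨j, hj⟩ := exists_nat_gt (M / c)
  refine ⟨K * j, fun μ hμ ν hν => ?_⟩
  obtain ⟨κ, v, w, h1, h2, hv, hw, h⟩ := step j μ hμ ν hν
  refine ⟨κ, v, w, h1, h2, hv, hw, ?_⟩
  rcases h with h | h | h
  · exact Or.inl h
  · exact Or.inr h
  · exfalso
    have h3 := (ENNReal.ofReal_le_ofReal_iff hM0).1 (le_add_self.trans h)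
    rw [div_lt_iff₀ hc] at hj
    linarith

/-- Two measures are `ε`-close if they agree up to absolutely continuous remainders of mass
at most `ε`. Stating closeness through a common part makes it stable under `EE`. -/
def Close (ε : ENNReal) (μ ν : Measure ℝ) : Prop :=
  ∃ κ v w : Measure ℝ, μ = κ + v ∧ ν = κ + w ∧ v ≪ mI ∧ w ≪ mI ∧ v univ ≤ ε ∧ w univ ≤ ε

lemma Close.symm {ε : ENNReal} {μ ν : Measure ℝ} (h : Close ε μ ν) : Close ε ν μ := by
  obtain ⟨κ, v, w, h1, h2, h3, h4, h5, h6⟩ := h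
  exact ⟨κ, w, v, h2, h1, h4, h3, h6, h5⟩

lemma Close.le {ε : ENNReal} {μ ν : Measure ℝ} (h : Close ε μ ν) (A : Set ℝ) :
    μ A ≤ ν A + ε := by
  obtain ⟨κ, v, w, rfl, rfl, -, -, h5, -⟩ := h
  rw [Measure.add_apply, Measure.add_apply]
  gcongr
  · exact le_self_add
  · exact (measure_mono (subset_univ A)).trans h5

lemma good_one {α B : ℝ} (hα : 0 < α) (hB : 1 ≤ B) : Good α B (fun _ => 1) := by
  refine ⟨fun _ _ _ _ _ => le_rfl, fun _ _ => zero_le_one, fun x hx => ?_⟩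
  have : 1 ≤ x ^ (-α) :=
    Real.one_le_rpow_of_pos_of_le_one_of_nonpos hx.1 hx.2.le (by linarith)
  nlinarith

lemma mI_eq_dens : mI = dens fun _ => 1 := by
  simp [dens]

lemma EE_ac {α β : ℝ} (hβ : 0 < β) (hβα : β < α) (hα1 : α < 1) {μ : Measure ℝ} (hμ : μ ≪ mI) :
    EE α β μ ≪ mI := by
  have hα : 0 < α := hβ.trans hβα
  have h0 : EE α β mI ≪ mI := by
    rw [mI_eq_dens, EE_dens hβ hβα hα1 (good_one hα le_rfl), ← mI_eq_dens]
    exact dens_ac _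
  -- both probabilities are positive on `(0, 1)`, so each map separately is nonsingular
  have h1 : mI ≪ mI.withDensity fun x => ENNReal.ofReal (P1 α x) := by
    refine withDensity_absolutelyContinuous' (P1_meas α).ennreal_ofReal.aemeasurable
      (ae_mI fun x hx => ?_)
    have := Real.rpow_nonneg hx.1.le α
    have : 0 < P1 α x := by unfold P1; split_ifs <;> positivity
    simpa using this
  have h2 : mI ≪ mI.withDensity fun x => ENNReal.ofReal (P2 α x) := by
    refine withDensity_absolutelyContinuous' (P2_meas α).ennreal_ofReal.aemeasurable
      (ae_mI fun x hx => ?_)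
    have := Real.rpow_le_one hx.1.le hx.2.le hα.le
    have : 0 < P2 α x := by
      unfold P2
      split_ifs
      · linarith
      · positivity
    simpa using this
  unfold EE ET at h0 ⊢
  have k1 : Measure.map (T1 α) mI ≪ mI :=
    (h1.map (T1_meas α)).trans ((Measure.le_add_right le_rfl).absolutelyContinuous.trans h0)
  have k2 : Measure.map (T2 β) mI ≪ mI :=
    (h2.map (T2_meas β)).trans ((Measure.le_add_left le_rfl).absolutelyContinuous.trans h0)
  refine Measure.AbsolutelyContinuous.add_left ?_ ?_
  · exact (((withDensity_absolutelyContinuous _ _).trans hμ).map (T1_meas α)).trans k1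
  · exact (((withDensity_absolutelyContinuous _ _).trans hμ).map (T2_meas β)).trans k2

lemma Close.iterate {α β : ℝ} (hβ : 0 < β) (hβα : β < α) (hα1 : α < 1) {ε : ENNReal}
    {μ ν : Measure ℝ} (h : Close ε μ ν) (n : ℕ) :
    Close ε ((EE α β)^[n] μ) ((EE α β)^[n] ν) := by
  induction n with
  | zero => exact h
  | succ n ih =>
    rw [Function.iterate_succ_apply', Function.iterate_succ_apply']
    obtain ⟨κ, v, w, h1, h2, h3, h4, h5, h6⟩ := ih
    refine ⟨EE α β κ, EE α β v, EE α β w, by rw [h1, EE_add], by rw [h2, EE_add],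
      EE_ac hβ hβα hα1 h3, EE_ac hβ hβα hα1 h4, ?_, ?_⟩
    · rwa [EE_univ (hβ.trans hβα) h3]
    · rwa [EE_univ (hβ.trans hβα) h4]

lemma EE_iter_univ {α β : ℝ} (hβ : 0 < β) (hβα : β < α) (hα1 : α < 1) {μ : Measure ℝ}
    (hμ : μ ≪ mI) (n : ℕ) : (EE α β)^[n] μ ≪ mI ∧ (EE α β)^[n] μ univ = μ univ := by
  induction n with
  | zero => exact ⟨hμ, rfl⟩
  | succ n ih =>
    rw [Function.iterate_succ_apply']
    exact ⟨EE_ac hβ hβα hα1 ih.1, by rw [EE_univ (hβ.trans hβα) ih.1, ih.2]⟩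

/-- Iterates of two good measures whose masses differ by at most `d` are eventually
`(ε + d)`-close, uniformly over all good measures. -/
lemma coupling_close {α β B M : ℝ} (hβ : 0 < β) (hβα : β < α) (hα1 : α < 1)
    (hM0 : 0 ≤ M) (hB0 : 0 ≤ B) (hB : 11 * M ≤ 2 * B * (1 + β - α)) {ε : ℝ} (hε : 0 < ε) :
    ∃ N : ℕ, ∀ n ≥ N, ∀ μ ∈ GoodMeas α B M, ∀ ν ∈ GoodMeas α B M, ∀ d : ENNReal,
      μ univ ≤ ν univ + d → ν univ ≤ μ univ + d →
      Close (ENNReal.ofReal ε + d) ((EE α β)^[n] μ) ((EE α β)^[n] ν) := by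
  obtain ⟨N, H⟩ := coupling hβ hβα hα1 hM0 hB0 hB hε
  refine ⟨N, fun n hn μ hμ ν hν d hd1 hd2 => ?_⟩
  obtain ⟨k, rfl⟩ := Nat.exists_eq_add_of_le hn
  rw [add_comm N k, Function.iterate_add_apply, Function.iterate_add_apply]
  apply Close.iterate hβ hβα hα1
  obtain ⟨κ, v, w, h1, h2, hv, hw, h⟩ := H μ hμ ν hν
  have m1 := (EE_iter_univ hβ hβα hα1 (GoodMeas.ac hμ) N).2
  have m2 := (EE_iter_univ hβ hβα hα1 (GoodMeas.ac hν) N).2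
  rw [h1, Measure.add_apply] at m1
  rw [h2, Measure.add_apply] at m2
  rw [← m1, ← m2, add_assoc] at hd1 hd2
  have hκ : κ univ ≠ ⊤ :=
    ne_top_of_le_ne_top (GoodMeas.univ_ne_top hμ) (m1 ▸ le_self_add)
  have hd1 := (ENNReal.add_le_add_iff_left hκ).1 hd1
  have hd2 := (ENNReal.add_le_add_iff_left hκ).1 hd2
  refine ⟨κ, v, w, h1, h2, GoodMeas.ac hv, GoodMeas.ac hw, ?_, ?_⟩
  · rcases h with h | h
    · exact h.trans le_self_add
    · exact hd1.trans (by gcongr)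
  · rcases h with h | h
    · exact hd2.trans (by gcongr)
    · exact h.trans le_self_add

/-! ### Closeness and the `L¹` distance of densities -/

lemma dens_close {f g : ℝ → ℝ} (hf : AEMeasurable f mI) (hg : AEMeasurable g mI)
    {ε : ENNReal} (h : ∫⁻ x, ‖f x - g x‖ₑ ∂mI ≤ ε) : Close ε (dens f) (dens g) := by
  have hF := hf.ennreal_ofReal
  have hG := hg.ennreal_ofReal
  have hsub : ∀ a b : ℝ, ENNReal.ofReal a - ENNReal.ofReal b ≤ ‖a - b‖ₑ := by
    intro a b
    rw [tsub_le_iff_right, Real.enorm_eq_ofReal_abs]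
    refine (ENNReal.ofReal_le_ofReal ?_).trans ENNReal.ofReal_add_le
    linarith [le_abs_self (a - b)]
  have hsplit : ∀ {f g : ℝ → ℝ}, AEMeasurable f mI → AEMeasurable g mI →
      dens f = mI.withDensity (fun x => min (ENNReal.ofReal (f x)) (ENNReal.ofReal (g x)))
        + mI.withDensity (fun x => ENNReal.ofReal (f x) - ENNReal.ofReal (g x)) := by
    intro f g hf hg
    ext s hs
    rw [Measure.add_apply, dens, withDensity_apply _ hs, withDensity_apply _ hs,
      withDensity_apply _ hs,
      ← lintegral_add_left' (hf.ennreal_ofReal.min hg.ennreal_ofReal).restrict]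
    refine lintegral_congr fun x => ?_
    rcases le_total (ENNReal.ofReal (f x)) (ENNReal.ofReal (g x)) with h | h
    · rw [min_eq_left h, tsub_eq_zero_of_le h, add_zero]
    · rw [min_eq_right h, add_tsub_cancel_of_le h]
  refine ⟨_, _, _, hsplit hf hg, ?_, withDensity_absolutelyContinuous _ _,
    withDensity_absolutelyContinuous _ (fun x => ENNReal.ofReal (g x) - ENNReal.ofReal (f x)),
    ?_, ?_⟩
  · rw [hsplit hg hf]
    simp only [min_comm]
  · rw [withDensity_apply _ .univ, Measure.restrict_univ]
    exact (lintegral_mono fun x => hsub _ _).trans h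
  · rw [withDensity_apply _ .univ, Measure.restrict_univ]
    refine (lintegral_mono fun x => ?_).trans h
    rw [enorm_sub_rev]
    exact hsub _ _

lemma lintegral_sub_le_of_close {f g : ℝ → ℝ} (hf : Measurable f) (hg : Measurable g)
    (hfin : dens g univ ≠ ⊤) {ε : ENNReal} (h : Close ε (dens f) (dens g)) :
    ∫⁻ x, (ENNReal.ofReal (f x) - ENNReal.ofReal (g x)) ∂mI ≤ ε := by
  have hF := hf.ennreal_ofReal
  have hG := hg.ennreal_ofReal
  set A := {x | ENNReal.ofReal (g x) ≤ ENNReal.ofReal (f x)} with hA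
  have hAm : MeasurableSet A := measurableSet_le hG hF
  have h1 := h.le A
  rw [dens, dens, withDensity_apply _ hAm, withDensity_apply _ hAm] at h1
  have h2 : ∫⁻ x, (ENNReal.ofReal (f x) - ENNReal.ofReal (g x)) ∂mI
      = ∫⁻ x in A, (ENNReal.ofReal (f x) - ENNReal.ofReal (g x)) ∂mI := by
    rw [← lintegral_indicator hAm]
    refine lintegral_congr fun x => ?_
    by_cases hx : x ∈ A
    · rw [indicator_of_mem hx]
    · rw [indicator_of_notMem hx, tsub_eq_zero_of_le (not_le.1 hx).le]
  have hfin' : ∫⁻ x in A, ENNReal.ofReal (g x) ∂mI ≠ ⊤ := by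
    rw [dens_univ] at hfin
    exact ne_top_of_le_ne_top hfin (setLIntegral_le_lintegral _ _)
  rw [h2, lintegral_sub hG hfin' ((ae_restrict_iff' hAm).2 (Filter.Eventually.of_forall
    fun x hx => hx)), tsub_le_iff_right, add_comm]
  exact h1

lemma lintegral_enorm_sub_le_of_close {f g : ℝ → ℝ} (hf : Measurable f) (hg : Measurable g)
    (hf0 : ∀ x, 0 ≤ f x) (hg0 : ∀ x, 0 ≤ g x) (hffin : dens f univ ≠ ⊤)
    (hgfin : dens g univ ≠ ⊤) {ε : ENNReal} (h : Close ε (dens f) (dens g)) :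
    ∫⁻ x, ‖f x - g x‖ₑ ∂mI ≤ ε + ε := by
  refine le_trans ?_ (add_le_add (lintegral_sub_le_of_close hf hg hgfin h)
    (lintegral_sub_le_of_close hg hf hffin h.symm))
  have hm : Measurable (fun x => ENNReal.ofReal (f x) - ENNReal.ofReal (g x)) :=
    hf.ennreal_ofReal.sub hg.ennreal_ofReal
  rw [← lintegral_add_left hm]
  refine lintegral_mono fun x => ?_
  dsimp only
  rw [← ENNReal.ofReal_sub _ (hg0 x), ← ENNReal.ofReal_sub _ (hf0 x), Real.enorm_eq_ofReal_abs]
  rcases le_total (f x) (g x) with h | h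
  · rw [abs_of_nonpos (by linarith), neg_sub]
    exact le_add_self
  · rw [abs_of_nonneg (by linarith)]
    exact le_self_add

/-! ### Existence -/

/-- The iterates of Lebesgue measure have densities converging in `L¹`, and the limit is
invariant. -/
lemma exists_acim {α β : ℝ} (hβ : 0 < β) (hβα : β < α) (hα1 : α < 1) :
    ∃ μ : Measure ℝ, IsProbabilityMeasure μ ∧ μ ≪ mI ∧ EE α β μ = μ := by
  have hα : 0 < α := hβ.trans hβα
  obtain ⟨B, hB1, hB⟩ : ∃ B : ℝ, 1 ≤ B ∧ 11 * 1 ≤ 2 * B * (1 + β - α) := by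
    refine ⟨max 1 (11 / (2 * (1 + β - α))), le_max_left _ _, ?_⟩
    have h0 : 0 < 2 * (1 + β - α) := by linarith
    have := le_max_right 1 (11 / (2 * (1 + β - α)))
    rw [div_le_iff₀ h0] at this
    linarith
  have hB0 : 0 ≤ B := zero_le_one.trans hB1
  have hgm : mI ∈ GoodMeas α B 1 := ⟨_, good_one hα hB1, mI_eq_dens, by simp⟩
  have hgood : ∀ n, (EE α β)^[n] mI ∈ GoodMeas α B 1 := fun n =>
    GoodMeas.iterate hβ hβα hα1 zero_le_one hB0 hB hgm n
  have hex : ∀ n, ∃ h : ℝ → ℝ, Measurable h ∧ (∀ x, 0 ≤ h x) ∧ (EE α β)^[n] mI = dens h := by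
    intro n
    obtain ⟨f, hf, e, -⟩ := hgood n
    have hm := aemeasurable_of_anti hf.anti
    refine ⟨fun x => max (hm.mk f x) 0, hm.measurable_mk.max measurable_const,
      fun x => le_max_right _ _, ?_⟩
    rw [e]
    refine withDensity_congr_ae ?_
    filter_upwards [hm.ae_eq_mk] with x hx
    rw [hx]
    simp
  choose h hhm hh0 hhe using hex
  have hmass : ∀ n, dens (h n) univ = 1 := fun n => by
    rw [← hhe, (EE_iter_univ hβ hβα hα1 (Measure.AbsolutelyContinuous.refl mI) n).2]
    exact measure_univ
  have hIntg : ∀ n, Integrable (h n) mI := fun n => by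
    refine ⟨(hhm n).aestronglyMeasurable, ?_⟩
    rw [hasFiniteIntegral_iff_ofReal (Filter.Eventually.of_forall (hh0 n)), ← dens_univ, hmass]
    exact ENNReal.one_lt_top
  have hcauchy : CauchySeq fun n => (hIntg n).toL1 (h n) := by
    rw [EMetric.cauchySeq_iff]
    intro ε hε
    obtain ⟨r, hr0, hr⟩ := ENNReal.lt_iff_exists_real_btwn.1 hε
    have hr1 : 0 < r := by simpa using hr.1
    obtain ⟨N, hN⟩ := coupling_close hβ hβα hα1 zero_le_one hB0 hB (half_pos hr1)
    have hclose : ∀ a b, a ≤ b → N ≤ a →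
        edist ((hIntg a).toL1 (h a)) ((hIntg b).toL1 (h b)) < ε := by
      intro a b hab ha
      obtain ⟨k, rfl⟩ := Nat.exists_eq_add_of_le hab
      have hc := hN a ha mI hgm _ (hgood k) 0
        (by rw [hhe, hmass]; simp) (by rw [hhe, hmass]; simp)
      rw [← Function.iterate_add_apply, hhe, hhe, add_zero] at hc
      rw [Integrable.edist_toL1_toL1]
      simp only [edist_eq_enorm_sub]
      refine (lintegral_enorm_sub_le_of_close (hhm _) (hhm _) (hh0 _) (hh0 _)
        (by rw [hmass]; simp) (by rw [hmass]; simp) hc).trans_lt ?_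
      rw [← ENNReal.ofReal_add (by positivity) (by positivity), add_halves]
      exact hr.2
    refine ⟨N, fun m hm n hn => ?_⟩
    rcases le_total m n with h | h
    · exact hclose m n h hm
    · rw [edist_comm]
      exact hclose n m h hn
  obtain ⟨F, hF⟩ := cauchySeq_tendsto_of_complete hcauchy
  have hFm : AEMeasurable (F : ℝ → ℝ) mI := (L1.integrable_coeFn F).aemeasurable
  -- along the iterates, the distance to the limit becomes arbitrarily small
  have hclose : ∀ ε : ENNReal, 0 < ε → ∃ N, ∀ n ≥ N, Close ε (dens (h n)) (dens F) := by
    intro ε hε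
    obtain ⟨N, hN⟩ := (EMetric.tendsto_atTop.1 hF) ε hε
    refine ⟨N, fun n hn => dens_close (hhm n).aemeasurable hFm ?_⟩
    have := (hN n hn).le
    rw [← Integrable.toL1_coeFn F (L1.integrable_coeFn F), Integrable.edist_toL1_toL1] at this
    simpa only [edist_eq_enorm_sub] using this
  refine ⟨dens F, ⟨?_⟩, dens_ac _, ?_⟩
  · apply le_antisymm
    · refine ENNReal.le_of_forall_pos_le_add fun ε hε _ => ?_
      obtain ⟨N, hN⟩ := hclose ε (by simpa using hε)
      have := (hN N le_rfl).symm.le univ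
      rwa [hmass] at this
    · refine ENNReal.le_of_forall_pos_le_add fun ε hε _ => ?_
      obtain ⟨N, hN⟩ := hclose ε (by simpa using hε)
      have := (hN N le_rfl).le univ
      rwa [hmass] at this
  · have hstep : ∀ n, EE α β (dens (h n)) = dens (h (n + 1)) := fun n => by
      rw [← hhe, ← hhe, Function.iterate_succ_apply']
    ext A hA
    apply le_antisymm
    · refine ENNReal.le_of_forall_pos_le_add fun ε hε _ => ?_
      have hε' : (0 : ENNReal) < (ε : ENNReal) / 2 := by
        simpa using hε.ne'
      obtain ⟨N, hN⟩ := hclose _ hε'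
      have h1 := ((hN N le_rfl).symm.iterate hβ hβα hα1 1).le A
      have h2 := (hN (N + 1) (Nat.le_succ N)).le A
      simp only [Function.iterate_one, hstep] at h1
      calc _ ≤ _ := h1
        _ ≤ dens F A + ε / 2 + ε / 2 := by gcongr
        _ = dens F A + ε := by rw [add_assoc, ENNReal.add_halves]
    · refine ENNReal.le_of_forall_pos_le_add fun ε hε _ => ?_
      have hε' : (0 : ENNReal) < (ε : ENNReal) / 2 := by
        simpa using hε.ne'
      obtain ⟨N, hN⟩ := hclose _ hε'
      have h1 := ((hN N le_rfl).iterate hβ hβα hα1 1).le A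
      have h2 := (hN (N + 1) (Nat.le_succ N)).symm.le A
      simp only [Function.iterate_one, hstep] at h1
      calc _ ≤ _ := h2
        _ ≤ EE α β (dens F) A + ε / 2 + ε / 2 := by gcongr
        _ = EE α β (dens F) A + ε := by rw [add_assoc, ENNReal.add_halves]

/-! ### Uniqueness -/

/-- A polynomial plus a large multiple of `2 - x` is positive and decreasing on `(0, 1)`. -/
lemma poly_anti (p : Polynomial ℝ) : ∃ C₀ : ℝ, ∀ C ≥ C₀,
    AntitoneOn (fun x => p.eval x + C * (2 - x)) (Ioo 0 1) ∧
    ∀ x ∈ Ioo (0 : ℝ) 1, |p.eval x| ≤ C := by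
  obtain ⟨c1, h1⟩ := isCompact_Icc.exists_bound_of_continuousOn (s := Icc (0 : ℝ) 1)
    p.continuous.continuousOn
  obtain ⟨c2, h2⟩ := isCompact_Icc.exists_bound_of_continuousOn (s := Icc (0 : ℝ) 1)
    p.derivative.continuous.continuousOn
  refine ⟨max c1 c2, fun C hC => ⟨?_, fun x hx => ?_⟩⟩
  · have hd : ∀ x : ℝ, HasDerivAt (fun x => p.eval x + C * (2 - x))
        (p.derivative.eval x + C * (-1)) x := fun x =>
      (p.hasDerivAt x).add (((hasDerivAt_id x).const_sub 2).const_mul C)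
    refine (antitoneOn_of_deriv_nonpos (convex_Icc (0 : ℝ) 1)
      (fun x _ => (hd x).continuousAt.continuousWithinAt)
      (fun x _ => (hd x).differentiableAt.differentiableWithinAt) fun x hx => ?_).mono
      Ioo_subset_Icc_self
    rw [(hd x).deriv]
    have h3 := h2 x (interior_subset hx)
    have h4 := le_abs_self (p.derivative.eval x)
    rw [Real.norm_eq_abs] at h3
    linarith [le_max_right c1 c2]
  · exact (h1 x (Ioo_subset_Icc_self hx)).trans ((le_max_left _ _).trans hC)

lemma exists_poly {f : ℝ → ℝ} (hf : Integrable f mI) {ε : ℝ} (hε : 0 < ε) :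
    ∃ p : Polynomial ℝ, ∫⁻ x, ‖f x - p.eval x‖ₑ ∂mI ≤ ENNReal.ofReal ε := by
  obtain ⟨g, -, hg, hgc, -⟩ := hf.exists_hasCompactSupport_lintegral_sub_le
    (ε := ENNReal.ofReal (ε / 2)) (by simpa using hε)
  obtain ⟨p, hp⟩ := exists_polynomial_near_of_continuousOn 0 1 g hgc.continuousOn (ε / 2)
    (half_pos hε)
  refine ⟨p, ?_⟩
  have h2 : ∫⁻ x, ‖g x - p.eval x‖ₑ ∂mI ≤ ENNReal.ofReal (ε / 2) := by
    calc _ ≤ ∫⁻ _, ENNReal.ofReal (ε / 2) ∂mI := by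
          refine lintegral_mono_ae (ae_mI fun x hx => ?_)
          rw [Real.enorm_eq_ofReal_abs, abs_sub_comm]
          exact ENNReal.ofReal_le_ofReal (hp x (Ioo_subset_Icc_self hx)).le
      _ = _ := by simp
  have hm : AEMeasurable (fun x => ‖f x - g x‖ₑ) mI :=
    (hf.aemeasurable.sub hgc.measurable.aemeasurable).enorm
  calc _ ≤ ∫⁻ x, (‖f x - g x‖ₑ + ‖g x - p.eval x‖ₑ) ∂mI := by
        refine lintegral_mono fun x => ?_
        have : f x - p.eval x = (f x - g x) + (g x - p.eval x) := by ring
        rw [this]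
        exact enorm_add_le _ _
    _ = ∫⁻ x, ‖f x - g x‖ₑ ∂mI + ∫⁻ x, ‖g x - p.eval x‖ₑ ∂mI := lintegral_add_left' hm _
    _ ≤ ENNReal.ofReal (ε / 2) + ENNReal.ofReal (ε / 2) := by gcongr
    _ = _ := by rw [← ENNReal.ofReal_add (by positivity) (by positivity), add_halves]

/-- Any absolutely continuous probability measure becomes close to a measure with a good density
once a large multiple of `2 - x` is added to both. -/
lemma approx {μ : Measure ℝ} [IsProbabilityMeasure μ] (hμ : μ ≪ mI) {ε : ℝ} (hε : 0 < ε) :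
    ∃ C₀ : ℝ, ∀ C ≥ C₀, 0 ≤ C → ∃ u : ℝ → ℝ, AntitoneOn u (Ioo 0 1) ∧
      (∀ x ∈ Ioo (0 : ℝ) 1, 0 ≤ u x ∧ u x ≤ 3 * C) ∧
      Close (ENNReal.ofReal ε) (μ + dens fun x => C * (2 - x)) (dens u) := by
  set f : ℝ → ℝ := fun x => (μ.rnDeriv mI x).toReal with hf
  have hfm : Measurable f := (Measure.measurable_rnDeriv _ _).ennreal_toReal
  have hfi : Integrable f mI := Measure.integrable_toReal_rnDeriv
  have hμf : μ = dens f := by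
    conv_lhs => rw [← Measure.withDensity_rnDeriv_eq μ mI hμ]
    refine withDensity_congr_ae ?_
    filter_upwards [Measure.rnDeriv_lt_top μ mI] with x hx
    rw [hf, ENNReal.ofReal_toReal hx.ne]
  obtain ⟨p, hp⟩ := exists_poly hfi hε
  obtain ⟨C₀, hC₀⟩ := poly_anti p
  refine ⟨C₀, fun C hC hC0 => ⟨fun x => p.eval x + C * (2 - x), (hC₀ C hC).1,
    fun x hx => ?_, ?_⟩⟩
  · have := abs_le.1 ((hC₀ C hC).2 x hx)
    constructor <;> nlinarith [hx.1, hx.2]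
  · rw [hμf, ← dens_add hfm.aemeasurable (fun x _ => ENNReal.toReal_nonneg)
      (fun x hx => mul_nonneg hC0 (by linarith [hx.2]))]
    have hp1 : Measurable fun x => p.eval x := p.continuous.measurable
    refine dens_close (by fun_prop) (by fun_prop) ?_
    simpa only [add_sub_add_right_eq_sub] using hp

lemma acim_le {α β : ℝ} (hβ : 0 < β) (hβα : β < α) (hα1 : α < 1) {μ ν : Measure ℝ}
    [IsProbabilityMeasure μ] [IsProbabilityMeasure ν] (hμ : μ ≪ mI) (hν : ν ≪ mI)
    (hμi : EE α β μ = μ) (hνi : EE α β ν = ν) (A : Set ℝ) : μ A ≤ ν A := by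
  have hα : 0 < α := hβ.trans hβα
  have main : ∀ ε : ℝ, 0 < ε → μ A ≤ ν A + ENNReal.ofReal (5 * ε) := by
    intro ε hε
    obtain ⟨C1, H1⟩ := approx hμ hε
    obtain ⟨C2, H2⟩ := approx hν hε
    set C := max 0 (max C1 C2) with hC
    have hC0 : 0 ≤ C := le_max_left _ _
    obtain ⟨u, hu, hub, hcu⟩ := H1 C ((le_max_left _ _).trans (le_max_right _ _)) hC0
    obtain ⟨w, hw, hwb, hcw⟩ := H2 C ((le_max_right _ _).trans (le_max_right _ _)) hC0
    set L := dens fun x => C * (2 - x) with hL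
    obtain ⟨B, hBC, hB⟩ : ∃ B : ℝ, 3 * C ≤ B ∧ 11 * (3 * C) ≤ 2 * B * (1 + β - α) := by
      refine ⟨max (3 * C) (11 * (3 * C) / (2 * (1 + β - α))), le_max_left _ _, ?_⟩
      have h0 : 0 < 2 * (1 + β - α) := by linarith
      have := le_max_right (3 * C) (11 * (3 * C) / (2 * (1 + β - α)))
      rw [div_le_iff₀ h0] at this
      linarith
    have hM0 : 0 ≤ 3 * C := by positivity
    have hB0 : 0 ≤ B := hM0.trans hBC
    have hgood : ∀ u : ℝ → ℝ, AntitoneOn u (Ioo 0 1) →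
        (∀ x ∈ Ioo (0 : ℝ) 1, 0 ≤ u x ∧ u x ≤ 3 * C) → dens u ∈ GoodMeas α B (3 * C) := by
      intro u hu hub
      refine ⟨u, ⟨hu, fun x hx => (hub x hx).1, fun x hx => ?_⟩, rfl, ?_⟩
      · have : 1 ≤ x ^ (-α) :=
          Real.one_le_rpow_of_pos_of_le_one_of_nonpos hx.1 hx.2.le (by linarith)
        nlinarith [(hub x hx).2]
      · rw [dens_univ]
        calc _ ≤ ∫⁻ _, ENNReal.ofReal (3 * C) ∂mI :=
              lintegral_mono_ae (ae_mI fun x hx => ENNReal.ofReal_le_ofReal (hub x hx).2)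
          _ = _ := by simp
    obtain ⟨N, hN⟩ := coupling_close hβ hβα hα1 hM0 hB0 hB hε
    have hmassL : (μ + L) univ = (ν + L) univ := by
      rw [Measure.add_apply, Measure.add_apply, measure_univ (μ := μ), measure_univ (μ := ν)]
    have hadd : ENNReal.ofReal ε + ENNReal.ofReal ε = ENNReal.ofReal (2 * ε) := by
      rw [← ENNReal.ofReal_add hε.le hε.le]
      congr 1
      ring
    -- the masses of the two approximations differ by at most `2 ε`
    have d1 : dens u univ ≤ dens w univ + ENNReal.ofReal (2 * ε) := by
      calc _ ≤ (μ + L) univ + ENNReal.ofReal ε := hcu.symm.le univ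
        _ = (ν + L) univ + ENNReal.ofReal ε := by rw [hmassL]
        _ ≤ dens w univ + ENNReal.ofReal ε + ENNReal.ofReal ε := by
          gcongr
          exact hcw.le univ
        _ = _ := by rw [add_assoc, hadd]
    have d2 : dens w univ ≤ dens u univ + ENNReal.ofReal (2 * ε) := by
      calc _ ≤ (ν + L) univ + ENNReal.ofReal ε := hcw.symm.le univ
        _ = (μ + L) univ + ENNReal.ofReal ε := by rw [hmassL]
        _ ≤ dens u univ + ENNReal.ofReal ε + ENNReal.ofReal ε := by
          gcongr
          exact hcu.le univ
        _ = _ := by rw [add_assoc, hadd]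
    have hcl := (hN N le_rfl _ (hgood u hu hub) _ (hgood w hw hwb) _ d1 d2).le A
    have hμN : (EE α β)^[N] μ = μ := Function.iterate_fixed hμi N
    have hνN : (EE α β)^[N] ν = ν := Function.iterate_fixed hνi N
    have h1 := (hcu.iterate hβ hβα hα1 N).le A
    have h2 := (hcw.symm.iterate hβ hβα hα1 N).le A
    rw [EE_iter_add, hμN, Measure.add_apply] at h1
    rw [EE_iter_add, hνN, Measure.add_apply] at h2
    have hLfin : (EE α β)^[N] L A ≠ ⊤ := by
      refine ne_top_of_le_ne_top ?_ (measure_mono (subset_univ A))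
      rw [(EE_iter_univ hβ hβα hα1 (dens_ac _) N).2]
      have h3 := hcu.le univ
      rw [Measure.add_apply] at h3
      refine ne_top_of_le_ne_top ?_ (le_add_self.trans h3)
      exact ENNReal.add_ne_top.2 ⟨GoodMeas.univ_ne_top (hgood u hu hub), ENNReal.ofReal_ne_top⟩
    refine (ENNReal.add_le_add_iff_right hLfin).1 ?_
    calc _ ≤ _ := h1
      _ ≤ (ν A + (EE α β)^[N] L A + ENNReal.ofReal ε)
          + (ENNReal.ofReal ε + ENNReal.ofReal (2 * ε)) + ENNReal.ofReal ε := by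
        gcongr
        exact hcl.trans (by gcongr)
      _ = ν A + (EE α β)^[N] L A + ENNReal.ofReal (5 * ε) := by
        have : ENNReal.ofReal (5 * ε) = ENNReal.ofReal ε
            + (ENNReal.ofReal ε + ENNReal.ofReal (2 * ε)) + ENNReal.ofReal ε := by
          rw [← ENNReal.ofReal_add (by positivity) (by positivity),
            ← ENNReal.ofReal_add (by positivity) (by positivity),
            ← ENNReal.ofReal_add (by positivity) (by positivity)]
          congr 1
          ring
        rw [this]
        ring
      _ = _ := by ring
  refine ENNReal.le_of_forall_pos_le_add fun ε hε _ => ?_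
  have := main (ε / 5) (by positivity)
  rwa [mul_div_cancel₀ (ε : ℝ) (by norm_num : (5 : ℝ) ≠ 0), ENNReal.ofReal_coe_nnreal] at this

/-- **Example 4.1.** For `0 < β < α < 1`, the random map `T = {T1, T2; p1, p2}` with
`T1(x) = x(1 + 2^α x^α)` on `[0,1/2)`, `T1(x) = 2x − 1` on `[1/2,1]`,
`T2(x) = x(1 + 2^β x^β)` on `[0,1/2)`, `T2(x) = (3/2)x − 3/4` on `[1/2,1]`,
`p1(x) = (1 + x^α)/3` on `[0,1/2)`, `p1(x) = 1/3` on `[1/2,1]`, `p2 = 1 − p1`,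
admits a unique absolutely continuous invariant probability measure. -/
theorem example_random_map_unique_acim (α β : ℝ) (hβ : 0 < β) (hβα : β < α) (hα : α < 1) :
    ∃! μ : Measure ℝ, IsProbabilityMeasure μ ∧ μ ≪ mI ∧
      ET (fun x => if x < 1 / 2 then x * (1 + 2 ^ α * x ^ α) else 2 * x - 1)
         (fun x => if x < 1 / 2 then x * (1 + 2 ^ β * x ^ β) else 3 / 2 * x - 3 / 4)
         (fun x => if x < 1 / 2 then (1 + x ^ α) / 3 else 1 / 3)
         (fun x => if x < 1 / 2 then (2 - x ^ α) / 3 else 2 / 3) μ = μ := by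
  obtain ⟨μ, hp, hac, hinv⟩ := exists_acim hβ hβα hα
  refine ⟨μ, ⟨hp, hac, hinv⟩, ?_⟩
  rintro ν ⟨hp', hac', hinv'⟩
  ext A _
  exact le_antisymm (acim_le hβ hβα hα hac' hac hinv' hinv A)
    (acim_le hβ hβα hα hac hac' hinv hinv' A)

end
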